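/- Let F be a field and let T : Fin p → Fin q → Fin r → F be an order-3 tensor with slices S_i = T(·,·,i) ∈ Mat_{p,q}(F), and suppose k is at least the tensor rank of T. For parameters a_1,…,a_k ∈ F^p, b_1,…,b_k ∈ F^q and λ_{i,j} ∈ F (1 ≤ i ≤ r, 1 ≤ j ≤ k), let E(a,b,λ) be the block-diagonal matrix diag( C_1, …, C_r, D_1, …, D_k ), where C_i = ( S_i , A , 0 ; 0 , I_k , −Λ_i ; Bᵀ , 0 , I_k ) with A the p×k matrix with columns a_1,…,a_k, B the q×k matrix with columns b_1,…,b_k, Λ_i = diag(λ_{i,1},…,λ_{i,k}), and where D_j ∈ F^{p+q} is the single-column matrix obtained by stacking a_j on top of b_j. Then the minimum of rank E(a,b,λ) over all choices of a, b, λ equals 2kr + (tensor rank of T). -/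

import Mathlib

/-- The tensor rank of an order-3 tensor `T : Fin p → Fin q → Fin r → F`: the least `l`
such that `T` is a sum of `l` pure tensors. -/
noncomputable def tensorRank3 (F : Type*) [Field F] (p q r : ℕ)
    (T : Fin p → Fin q → Fin r → F) : ℕ :=
  sInf {l : ℕ | ∃ (a : Fin l → Fin p → F) (b : Fin l → Fin q → F) (c : Fin l → Fin r → F),
    ∀ i j k, T i j k = ∑ u : Fin l, a u i * b u j * c u k}

/-- The block matrix `C = ( S , A , 0 ; 0 , I_k , -Λ ; Bᵀ , 0 , I_k )`, where `A` has
columns `a_1, …, a_k`, `B` has columns `b_1, …, b_k` and `Λ = diag(λ_1, …, λ_k)`. -/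
def Cblock (F : Type*) [Field F] (p q k : ℕ) (S : Matrix (Fin p) (Fin q) F)
    (a : Fin k → Fin p → F) (b : Fin k → Fin q → F) (lam : Fin k → F) :
    Matrix (Fin p ⊕ (Fin k ⊕ Fin k)) (Fin q ⊕ (Fin k ⊕ Fin k)) F :=
  Matrix.fromBlocks S
    (Matrix.of fun i (j : Fin k ⊕ Fin k) => Sum.elim (fun j' => a j' i) (fun _ => (0 : F)) j)
    (Matrix.of fun (i : Fin k ⊕ Fin k) j => Sum.elim (fun _ => (0 : F)) (fun i' => b i' j) i)
    (Matrix.fromBlocks 1 (-(Matrix.diagonal lam)) 0 1)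

/-- The block-diagonal matrix `E(a,b,λ) = diag( C_1, …, C_r, D_1, …, D_k )`, where
`C_i = ( S_i , A , 0 ; 0 , I_k , -Λ_i ; Bᵀ , 0 , I_k )` is built from the `i`-th slice
`S_i` of `T` and `Λ_i = diag(λ_{i,1}, …, λ_{i,k})`, and where `D_j` is the single column
obtained by stacking `a_j` on top of `b_j`. -/
def Emat (F : Type*) [Field F] (p q r k : ℕ) (T : Fin p → Fin q → Fin r → F)
    (a : Fin k → Fin p → F) (b : Fin k → Fin q → F) (lam : Fin r → Fin k → F) :
    Matrix (((Fin p ⊕ (Fin k ⊕ Fin k)) × Fin r) ⊕ ((Fin p ⊕ Fin q) × Fin k))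
           (((Fin q ⊕ (Fin k ⊕ Fin k)) × Fin r) ⊕ (Unit × Fin k)) F :=
  Matrix.fromBlocks
    (Matrix.blockDiagonal fun i : Fin r =>
      Cblock F p q k (Matrix.of fun x y => T x y i) a b (lam i))
    0 0
    (Matrix.blockDiagonal fun j : Fin k =>
      Matrix.of fun (rj : Fin p ⊕ Fin q) (_ : Unit) => Sum.elim (a j) (b j) rj)


open Matrix in
theorem rank_fromBlocks_diag_aux {F : Type*} [Field F] {m n l o : Type*} [Fintype m] [Fintype n]
    [Fintype l] [Fintype o] (A : Matrix m n F) (D : Matrix l o F) :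
    (fromBlocks A 0 0 D).rank = A.rank + D.rank := by
  let L : (LinearMap.range A.mulVecLin × LinearMap.range D.mulVecLin) →ₗ[F] (m ⊕ l → F) :=
    { toFun := fun f => Sum.elim (f.1 : m → F) (f.2 : l → F)
      map_add' := by
        intro f g; ext x; rcases x with x | x <;> simp
      map_smul' := by
        intro c f; ext x; rcases x with x | x <;> simp }
  have hL : Function.Injective L := by
    intro f g h
    ext x
    · exact congrFun h (Sum.inl x)
    · exact congrFun h (Sum.inr x)
  have hr : LinearMap.range L = LinearMap.range (fromBlocks A 0 0 D).mulVecLin := by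
    ext y
    constructor
    · rintro ⟨⟨⟨_, u, rfl⟩, ⟨_, v, rfl⟩⟩, rfl⟩
      refine ⟨Sum.elim u v, ?_⟩
      simp [L, fromBlocks_mulVec]
    · rintro ⟨w, rfl⟩
      refine ⟨⟨⟨_, w ∘ Sum.inl, rfl⟩, ⟨_, w ∘ Sum.inr, rfl⟩⟩, ?_⟩
      simp [L, fromBlocks_mulVec]
  unfold Matrix.rank
  rw [← hr, LinearMap.finrank_range_of_inj hL, Module.finrank_prod]

open Matrix in
theorem rank_blockDiagonal_aux {F : Type*} [Field F] {m n o : Type*} [Fintype m] [Fintype n]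
    [Fintype o] [DecidableEq o] (A : o → Matrix m n F) :
    (blockDiagonal A).rank = ∑ i, (A i).rank := by
  let L : ((i : o) → LinearMap.range (A i).mulVecLin) →ₗ[F] (m × o → F) :=
    { toFun := fun f x => (f x.2 : m → F) x.1
      map_add' := by
        intro f g; ext x; simp
      map_smul' := by
        intro c f; ext x; simp }
  have hL : Function.Injective L := by
    intro f g h
    ext i x
    exact congrFun h (x, i)
  have key : ∀ w : n × o → F, ∀ x : m × o, (blockDiagonal A *ᵥ w) x
      = (A x.2 *ᵥ (fun j => w (j, x.2))) x.1 := by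
    rintro w ⟨x, i⟩
    simp [mulVec, dotProduct, Fintype.sum_prod_type, blockDiagonal_apply]
  have hr : LinearMap.range L = LinearMap.range (blockDiagonal A).mulVecLin := by
    ext y
    constructor
    · rintro ⟨f, rfl⟩
      choose u hu using fun i => (f i).2
      refine ⟨fun x => u x.2 x.1, ?_⟩
      ext x
      rw [mulVecLin_apply, key]
      have := congrFun (hu x.2) x.1
      simpa [L] using this
    · rintro ⟨w, rfl⟩
      refine ⟨fun i => ⟨_, fun j => w (j, i), rfl⟩, ?_⟩
      ext x
      rw [mulVecLin_apply, key]
      simp [L]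
  unfold Matrix.rank
  rw [← hr, LinearMap.finrank_range_of_inj hL, Module.finrank_pi_fintype]

open Matrix in
theorem rank_decomp_aux {F : Type*} [Field F] {m n : Type*} [Fintype m] [Fintype n]
    [DecidableEq n] (M : Matrix m n F) :
    ∃ (x : Fin M.rank → m → F) (y : Fin M.rank → n → F), ∀ i j, M i j = ∑ u, x u i * y u j := by
  let B := Module.finBasis F (LinearMap.range M.mulVecLin)
  refine ⟨fun u => (B u : m → F), fun u j => B.repr ⟨_, Pi.single j 1, rfl⟩ u, fun i j => ?_⟩
  have h := B.sum_repr ⟨M.mulVecLin (Pi.single j 1), Pi.single j 1, rfl⟩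
  have h2 := congrFun (congrArg Subtype.val h) i
  have h3 : M.mulVecLin (Pi.single j 1) i = M i j := by simp
  rw [← h3]
  refine h2.symm.trans ?_
  rw [AddSubmonoidClass.coe_finsetSum, Finset.sum_apply]
  refine Finset.sum_congr rfl fun u _ => ?_
  rw [mul_comm]
  rfl

open Matrix in
theorem rank_Cblock_aux (F : Type*) [Field F] (p q k : ℕ) (S : Matrix (Fin p) (Fin q) F)
    (a : Fin k → Fin p → F) (b : Fin k → Fin q → F) (lam : Fin k → F) :
    (Cblock F p q k S a b lam).rank =
      2 * k + (Matrix.of fun i j => S i j - ∑ u, a u i * b u j * lam u).rank := by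
  let A : Matrix (Fin p) (Fin k ⊕ Fin k) F :=
    Matrix.of fun i j => Sum.elim (fun j' => a j' i) (fun j' => a j' i * lam j') j
  let B : Matrix (Fin k ⊕ Fin k) (Fin q) F :=
    Matrix.of fun i j => Sum.elim (fun i' => lam i' * b i' j) (fun i' => b i' j) i
  let R : Matrix (Fin p) (Fin q) F := Matrix.of fun i j => S i j - ∑ u, a u i * b u j * lam u
  let D : Matrix (Fin k ⊕ Fin k) (Fin k ⊕ Fin k) F :=
    fromBlocks 1 (-(Matrix.diagonal lam)) 0 1
  have e : Cblock F p q k S a b lam =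
      (fromBlocks 1 A 0 1 : Matrix (Fin p ⊕ (Fin k ⊕ Fin k)) (Fin p ⊕ (Fin k ⊕ Fin k)) F) *
      (fromBlocks R 0 0 D : Matrix (Fin p ⊕ (Fin k ⊕ Fin k)) (Fin q ⊕ (Fin k ⊕ Fin k)) F) *
      (fromBlocks 1 0 B 1 : Matrix (Fin q ⊕ (Fin k ⊕ Fin k)) (Fin q ⊕ (Fin k ⊕ Fin k)) F) := by
    rw [fromBlocks_multiply, fromBlocks_multiply]
    unfold Cblock
    ext i j
    rcases i with i | i | i <;> rcases j with j | j | j <;>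
      simp [A, B, R, D, Matrix.mul_apply, Matrix.diagonal_apply, Matrix.one_apply]
    have hs : ∑ u, a u i * b u j * lam u = ∑ u, a u i * (lam u * b u j) :=
      Finset.sum_congr rfl fun u _ => by ring
    rw [hs, sub_add_cancel]
  have hR : (Matrix.of fun i j => S i j - ∑ u, a u i * b u j * lam u) = R := rfl
  have hD : D.rank = 2 * k := by
    rw [rank_of_isUnit D]
    · simp; ring
    · rw [Matrix.isUnit_iff_isUnit_det]; simp [D]
  rw [hR, e, rank_mul_eq_left_of_isUnit_det, rank_mul_eq_right_of_isUnit_det,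
    rank_fromBlocks_diag_aux, hD, add_comm]
  · simp
  · simp

theorem tensorRank3_le_aux (F : Type*) [Field F] (p q r : ℕ) (T : Fin p → Fin q → Fin r → F)
    {ι : Type*} [Fintype ι] (a : ι → Fin p → F) (b : ι → Fin q → F) (c : ι → Fin r → F)
    (h : ∀ i j k, T i j k = ∑ u, a u i * b u j * c u k) :
    tensorRank3 F p q r T ≤ Fintype.card ι := by
  let e := Fintype.equivFin ι
  refine Nat.sInf_le ⟨a ∘ e.symm, b ∘ e.symm, c ∘ e.symm, fun i j k => ?_⟩
  rw [h]
  exact (Equiv.sum_comp e.symm (fun u => a u i * b u j * c u k)).symm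

theorem tensorRank3_spec_aux (F : Type*) [Field F] (p q r : ℕ) (T : Fin p → Fin q → Fin r → F) :
    ∃ (a : Fin (tensorRank3 F p q r T) → Fin p → F) (b : Fin (tensorRank3 F p q r T) → Fin q → F)
      (c : Fin (tensorRank3 F p q r T) → Fin r → F),
    ∀ i j k, T i j k = ∑ u, a u i * b u j * c u k := by
  refine Nat.sInf_mem (s := {l : ℕ | ∃ (a : Fin l → Fin p → F) (b : Fin l → Fin q → F)
    (c : Fin l → Fin r → F), ∀ i j k, T i j k = ∑ u : Fin l, a u i * b u j * c u k}) ?_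
  let e := Fintype.equivFin (Fin p × Fin q)
  refine ⟨_, fun u => Pi.single (e.symm u).1 1, fun u => Pi.single (e.symm u).2 1,
    fun u => T (e.symm u).1 (e.symm u).2, fun i j k => ?_⟩
  rw [Equiv.sum_comp e.symm (fun u => (Pi.single u.1 1 : Fin p → F) i *
    (Pi.single u.2 1 : Fin q → F) j * T u.1 u.2 k)]
  simp [Fintype.sum_prod_type, Pi.single_apply]

theorem rank_Emat_aux (F : Type*) [Field F] (p q r k : ℕ) (T : Fin p → Fin q → Fin r → F)
    (a : Fin k → Fin p → F) (b : Fin k → Fin q → F) (lam : Fin r → Fin k → F) :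
    (Emat F p q r k T a b lam).rank = 2 * k * r +
      ((∑ i, (Matrix.of fun x y => T x y i - ∑ u, a u x * b u y * lam i u).rank) +
      ∑ j, (Matrix.of fun (rj : Fin p ⊕ Fin q) (_ : Unit) => Sum.elim (a j) (b j) rj).rank) := by
  unfold Emat
  rw [rank_fromBlocks_diag_aux, rank_blockDiagonal_aux, rank_blockDiagonal_aux]
  simp_rw [rank_Cblock_aux]
  rw [Finset.sum_add_distrib]
  simp
  ring

theorem rank_Emat_ge_aux (F : Type*) [Field F] (p q r k : ℕ) (T : Fin p → Fin q → Fin r → F)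
    (a : Fin k → Fin p → F) (b : Fin k → Fin q → F) (lam : Fin r → Fin k → F) :
    2 * k * r + tensorRank3 F p q r T ≤ (Emat F p q r k T a b lam).rank := by
  classical
  rw [rank_Emat_aux]
  refine Nat.add_le_add_left ?_ _
  choose x y hxy using fun i => rank_decomp_aux
    (Matrix.of fun x y => T x y i - ∑ u, a u x * b u y * lam i u)
  have h := tensorRank3_le_aux F p q r T
    (ι := (Σ i : Fin r, Fin (Matrix.of fun x y => T x y i - ∑ u, a u x * b u y * lam i u).rank) ⊕
      {j : Fin k // a j ≠ 0})
    (Sum.elim (fun s => x s.1 s.2) (fun j => a j))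
    (Sum.elim (fun s => y s.1 s.2) (fun j => b j))
    (Sum.elim (fun s => Pi.single s.1 1) (fun j i => lam i j)) (by
      intro i j t
      rw [Fintype.sum_sum_type, Fintype.sum_sigma]
      simp only [Sum.elim_inl, Sum.elim_inr]
      have h1 : ∑ s : {j : Fin k // a j ≠ 0}, a s i * b s j * lam t s
          = ∑ u, a u i * b u j * lam t u := by
        rw [← Finset.sum_subtype (Finset.univ.filter fun u => a u ≠ 0) (by simp)
          (fun u => a u i * b u j * lam t u)]
        refine Finset.sum_subset (Finset.subset_univ _) fun u _ hu => ?_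
        have hu' : a u = 0 := by simpa using hu
        simp [hu']
      rw [h1, Finset.sum_eq_single t]
      · have := hxy t i j
        simp only [Matrix.of_apply] at this
        simp [← this]
      · intro s _ hs
        simp [Pi.single_apply, hs.symm]
      · simp)
  refine h.trans ?_
  rw [Fintype.card_sum, Fintype.card_sigma]
  simp only [Fintype.card_fin]
  refine Nat.add_le_add_left ?_ _
  rw [Fintype.card_subtype, Finset.card_filter]
  refine Finset.sum_le_sum fun j _ => ?_
  split_ifs with hj
  · rw [Nat.one_le_iff_ne_zero]
    intro h0
    obtain ⟨x, y, hx⟩ := rank_decomp_aux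
      (Matrix.of fun (rj : Fin p ⊕ Fin q) (_ : Unit) => Sum.elim (a j) (b j) rj)
    apply hj
    ext i
    have := hx (Sum.inl i) ()
    have : IsEmpty (Fin (Matrix.of fun (rj : Fin p ⊕ Fin q) (_ : Unit) => Sum.elim (a j) (b j) rj).rank) := by
      rw [h0]; infer_instance
    simpa using hx (Sum.inl i) ()
  · exact Nat.zero_le _

theorem rank_Emat_le_aux (F : Type*) [Field F] (p q r k : ℕ) (T : Fin p → Fin q → Fin r → F)
    (hk : tensorRank3 F p q r T ≤ k) :
    ∃ (a : Fin k → Fin p → F) (b : Fin k → Fin q → F) (lam : Fin r → Fin k → F),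
      (Emat F p q r k T a b lam).rank ≤ 2 * k * r + tensorRank3 F p q r T := by
  obtain ⟨a, b, c, h⟩ := tensorRank3_spec_aux F p q r T
  generalize tensorRank3 F p q r T = l at *
  obtain ⟨d, rfl⟩ := Nat.exists_eq_add_of_le hk
  refine ⟨Fin.append a 0, Fin.append b 0, fun i => Fin.append (fun u => c u i) 0, ?_⟩
  rw [rank_Emat_aux]
  refine Nat.add_le_add_left ?_ _
  have h1 : ∀ i, (Matrix.of fun x y => T x y i - ∑ u, (Fin.append a 0 : Fin (l + d) → Fin p → F) u x *
      (Fin.append b 0 : Fin (l + d) → Fin q → F) u y *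
      (Fin.append (fun u => c u i) 0 : Fin (l + d) → F) u) = 0 := by
    intro i
    ext x y
    simp [Fin.sum_univ_add, h]
  simp only [h1, Matrix.rank_zero, Finset.sum_const_zero, zero_add]
  rw [Fin.sum_univ_add]
  have h2 : ∀ j : Fin d, (Matrix.of fun (rj : Fin p ⊕ Fin q) (_ : Unit) => Sum.elim
      ((Fin.append a 0 : Fin (l + d) → Fin p → F) (Fin.natAdd l j))
      ((Fin.append b 0 : Fin (l + d) → Fin q → F) (Fin.natAdd l j)) rj) = 0 := by
    intro j
    ext x y
    rcases x with x | x <;> simp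
  simp only [h2, Matrix.rank_zero, Finset.sum_const_zero, add_zero]
  refine (Finset.sum_le_card_nsmul _ _ 1 fun j _ => ?_).trans (by simp)
  exact (Matrix.rank_le_card_width _).trans (by simp)

/-- If `k` is at least the tensor rank of `T`, then the minimum of
`rank E(a,b,λ)` over all choices of the parameters `a`, `b`, `λ` equals `2kr` plus the
tensor rank of `T`, where `E(a,b,λ) = diag( C_1, …, C_r, D_1, …, D_k )`. -/
theorem sInf_rank_Emat_eq
    (F : Type*) [Field F] (p q r k : ℕ) (T : Fin p → Fin q → Fin r → F)
    (hk : tensorRank3 F p q r T ≤ k) :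
    sInf {d : ℕ | ∃ (a : Fin k → Fin p → F) (b : Fin k → Fin q → F) (lam : Fin r → Fin k → F),
        (Emat F p q r k T a b lam).rank = d}
      = 2 * k * r + tensorRank3 F p q r T := by
  refine le_antisymm ?_ ?_
  · obtain ⟨a, b, lam, h⟩ := rank_Emat_le_aux F p q r k T hk
    exact le_trans (Nat.sInf_le ⟨a, b, lam, rfl⟩) h
  · refine le_csInf ⟨_, 0, 0, 0, rfl⟩ ?_
    rintro d ⟨a, b, lam, rfl⟩
    exact rank_Emat_ge_aux F p q r k T a b lam
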